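/- Let E be an equivalence relation on ℕ such that E × id is computably reducible to E. Suppose Q ⊆ ℕ, e₀ ∈ ℕ, and h : ℕ → ℕ is total computable with: for all n, Q(n) ⟺ h(n) E⁺ e₀, and h(n) ⊆_E e₀ for all n. Define P ⊆ ℕ by P(n) ⟺ ∀p ∃q Q(⟨p,q,n⟩). Then there exist f₀ ∈ ℕ and a total computable g : ℕ → ℕ such that for all n: P(n) ⟺ g(n) E⁺⁺⁺ f₀, and g(n) ⊆_{E⁺⁺} f₀ for all n. -/

import Mathlib

/-- The `e`-th partial computable function. -/
def phi (e : ℕ) : ℕ →. ℕ :=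
  Nat.Partrec.Code.eval (Denumerable.ofNat Nat.Partrec.Code e)

/-- `W_e`, the `e`-th c.e. set: the domain of `φ_e`. -/
def WSet (e : ℕ) : Set ℕ := (phi e).Dom

/-- The `E`-equivalence class of `k`. -/
def classOf (E : ℕ → ℕ → Prop) (k : ℕ) : Set ℕ := {x | E k x}

/-- Computable reducibility of binary relations on ℕ. -/
def Reduces (E F : ℕ → ℕ → Prop) : Prop :=
  ∃ f : ℕ → ℕ, Computable f ∧ ∀ m n, E m n ↔ F (f m) (f n)

/-- The computable FS-jump of `E`: `e E⁺ e'` iff the set of `E`-classes of elements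
of `ran φ_e` equals the set of `E`-classes of elements of `ran φ_{e'}`. -/
def FSJump (E : ℕ → ℕ → Prop) : ℕ → ℕ → Prop :=
  fun e e' => classOf E '' (phi e).ran = classOf E '' (phi e').ran

/-- `e ⊆_E e'`: every element of `ran φ_e` is `E`-equivalent to some element
of `ran φ_{e'}`. -/
def subE (E : ℕ → ℕ → Prop) (e e' : ℕ) : Prop :=
  ∀ k ∈ (phi e).ran, ∃ m ∈ (phi e').ran, E k m

/-- The product `E × id`, with `ℕ × ℕ` identified with ℕ via the pairing bijection. -/
def prodId (E : ℕ → ℕ → Prop) : ℕ → ℕ → Prop :=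
  fun a b => E (Nat.unpair a).1 (Nat.unpair b).1 ∧ (Nat.unpair a).2 = (Nat.unpair b).2

/-- Coding of triples: `⟨p,q,n⟩`. -/
def tripleCode (p q n : ℕ) : ℕ := Nat.pair p (Nat.pair q n)

section helpers

open Nat.Partrec

theorem aux_smn (f : ℕ × ℕ →. ℕ) (hf : Partrec f) :
    ∃ s : ℕ → ℕ, Computable s ∧ ∀ x y, phi (s x) y = f (x, y) := by
  have h1 : Partrec (fun n : ℕ => f (Nat.unpair n)) := hf.comp Computable.unpair
  obtain ⟨c, hc⟩ := Code.exists_code.1 (Partrec.nat_iff.1 h1)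
  refine ⟨fun x => Encodable.encode (Code.curry c x), ?_, ?_⟩
  · exact Computable.encode.comp
      ((Code.primrec₂_curry.to_comp).comp (Computable.const c) Computable.id)
  · intro x y
    simp [phi, Code.eval_curry, hc]

theorem aux_phi_partrec : Partrec₂ phi := by
  have := Code.eval_part.comp ((Computable.ofNat Code).comp (Computable.fst (α := ℕ) (β := ℕ)))
    Computable.snd
  exact this

theorem aux_total (F : ℕ → ℕ → ℕ) (hF : Computable₂ F) :
    ∃ s : ℕ → ℕ, Computable s ∧ ∀ x k, k ∈ (phi (s x)).ran ↔ ∃ y, F x y = k := by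
  obtain ⟨s, hs, h⟩ := aux_smn (fun p => Part.some (F p.1 p.2)) hF.partrec
  refine ⟨s, hs, fun x k => ?_⟩
  simp only [PFun.ran, Set.mem_setOf_eq, h, Part.mem_some_iff, eq_comm]

theorem aux_union : ∃ U : ℕ → ℕ → ℕ, Computable₂ U ∧
    ∀ a b k, k ∈ (phi (U a b)).ran ↔ k ∈ (phi a).ran ∨ k ∈ (phi b).ran := by
  have hidx : Computable (fun p : ℕ × ℕ =>
      cond (Nat.bodd p.2) (Nat.unpair p.1).1 (Nat.unpair p.1).2) :=
    Computable.cond (Primrec.nat_bodd.to_comp.comp Computable.snd)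
      (Computable.fst.comp (Computable.unpair.comp Computable.fst))
      (Computable.snd.comp (Computable.unpair.comp Computable.fst))
  have hf := aux_phi_partrec.comp hidx (Primrec.nat_div2.to_comp.comp Computable.snd)
  obtain ⟨s, hs, h⟩ := aux_smn _ hf
  refine ⟨fun a b => s (Nat.pair a b), hs.comp Primrec₂.natPair.to_comp, fun a b k => ?_⟩
  simp only [PFun.ran, Set.mem_setOf_eq, h, Nat.unpair_pair]
  constructor
  · rintro ⟨y, hy⟩
    cases hb : Nat.bodd y <;> rw [hb] at hy
    · exact Or.inr ⟨_, hy⟩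
    · exact Or.inl ⟨_, hy⟩
  · rintro (⟨y, hy⟩ | ⟨y, hy⟩)
    · refine ⟨Nat.bit true y, ?_⟩
      rw [Nat.bodd_bit, Nat.div2_bit]; exact hy
    · refine ⟨Nat.bit false y, ?_⟩
      rw [Nat.bodd_bit, Nat.div2_bit]; exact hy

theorem aux_tag (r : ℕ → ℕ) (hr : Computable r) : ∃ J : ℕ → ℕ → ℕ, Computable₂ J ∧
    ∀ a p k, k ∈ (phi (J a p)).ran ↔ ∃ x ∈ (phi a).ran, r (Nat.pair x p) = k := by
  have h1 : Partrec (fun p : ℕ × ℕ => phi (Nat.unpair p.1).1 p.2) :=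
    aux_phi_partrec.comp (Computable.fst.comp (Computable.unpair.comp Computable.fst))
      Computable.snd
  have h2 : Computable₂ (fun (p : ℕ × ℕ) (x : ℕ) => r (Nat.pair x (Nat.unpair p.1).2)) :=
    hr.comp (Primrec₂.natPair.to_comp.comp Computable.snd
      (Computable.snd.comp (Computable.unpair.comp (Computable.fst.comp Computable.fst))))
  obtain ⟨s, hs, h⟩ := aux_smn _ (h1.map h2)
  refine ⟨fun a b => s (Nat.pair a b), hs.comp Primrec₂.natPair.to_comp, fun a b k => ?_⟩
  simp only [PFun.ran, Set.mem_setOf_eq, h, Nat.unpair_pair, Part.mem_map_iff]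
  constructor
  · rintro ⟨y, x, hx, hk⟩
    exact ⟨x, ⟨y, hx⟩, hk⟩
  · rintro ⟨x, ⟨y, hx⟩, hk⟩
    exact ⟨y, x, hx, hk⟩

theorem aux_fs_equiv (E : ℕ → ℕ → Prop) : Equivalence (FSJump E) :=
  ⟨fun _ => rfl, fun h => Eq.symm h, fun h h' => Eq.trans h h'⟩

theorem aux_class {E : ℕ → ℕ → Prop} (hE : Equivalence E) (a b : ℕ) :
    classOf E a = classOf E b ↔ E a b := by
  constructor
  · intro h
    have : b ∈ classOf E b := hE.refl b
    rw [← h] at this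
    exact this
  · intro h
    ext x
    exact ⟨fun hx => hE.trans (hE.symm h) hx, fun hx => hE.trans h hx⟩

theorem aux_sub_iff {E : ℕ → ℕ → Prop} (hE : Equivalence E) (a b : ℕ) :
    subE E a b ↔ classOf E '' (phi a).ran ⊆ classOf E '' (phi b).ran := by
  constructor
  · rintro h _ ⟨k, hk, rfl⟩
    obtain ⟨m, hm, he⟩ := h k hk
    exact ⟨m, hm, ((aux_class hE _ _).2 he).symm⟩
  · intro h k hk
    obtain ⟨m, hm, he⟩ := h ⟨k, hk, rfl⟩
    exact ⟨m, hm, (aux_class hE _ _).1 he.symm⟩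

theorem aux_fs_iff {E : ℕ → ℕ → Prop} (hE : Equivalence E) (a b : ℕ) :
    FSJump E a b ↔ subE E a b ∧ subE E b a := by
  rw [aux_sub_iff hE, aux_sub_iff hE]
  exact Set.Subset.antisymm_iff

theorem aux_sub_trans {E : ℕ → ℕ → Prop} (hE : Equivalence E) {a b c : ℕ}
    (h : subE E a b) (h' : subE E b c) : subE E a c := by
  rw [aux_sub_iff hE] at *
  exact h.trans h'

theorem aux_sub_refl {E : ℕ → ℕ → Prop} (hE : Equivalence E) (a : ℕ) : subE E a a :=
  fun k hk => ⟨k, hk, hE.refl k⟩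

end helpers

/-- Absorbing a `∀∃` quantifier pair with three jumps: if `E × id ≤ E` and `Q` is
reducible to `E⁺` via `h, e₀` with `h n ⊆_E e₀`, and `P n ⟺ ∀p ∃q Q(⟨p,q,n⟩)`, then
`P` is reducible to `E⁺⁺⁺` via some computable `g, f₀` with `g n ⊆_{E⁺⁺} f₀`. -/
theorem successor_step (E : ℕ → ℕ → Prop) (hE : Equivalence E)
    (hprod : Reduces (prodId E) E)
    (Q : Set ℕ) (e₀ : ℕ) (h : ℕ → ℕ) (hh : Computable h)
    (hQ : ∀ n, n ∈ Q ↔ FSJump E (h n) e₀) (hsub : ∀ n, subE E (h n) e₀)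
    (P : Set ℕ) (hP : ∀ n, n ∈ P ↔ ∀ p, ∃ q, tripleCode p q n ∈ Q) :
    ∃ f₀ : ℕ, ∃ g : ℕ → ℕ, Computable g ∧
      (∀ n, n ∈ P ↔ FSJump (FSJump (FSJump E)) (g n) f₀) ∧
      (∀ n, subE (FSJump (FSJump E)) (g n) f₀) := by
  obtain ⟨r, hr, hrE⟩ := hprod
  obtain ⟨U, hU, hUr⟩ := aux_union
  obtain ⟨J, hJ, hJr⟩ := aux_tag r hr
  obtain ⟨S, hS, hSr⟩ := aux_total (fun e v => U v e) (hU.comp Computable.snd Computable.fst)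
  -- basic facts
  have Ul : ∀ (F : ℕ → ℕ → Prop) (_ : Equivalence F) a b, subE F a (U a b) :=
    fun F hF a b k hk => ⟨k, (hUr a b k).2 (Or.inl hk), hF.refl k⟩
  have Ur : ∀ (F : ℕ → ℕ → Prop) (_ : Equivalence F) a b, subE F b (U a b) :=
    fun F hF a b k hk => ⟨k, (hUr a b k).2 (Or.inr hk), hF.refl k⟩
  have Ule : ∀ (F : ℕ → ℕ → Prop) a b c, subE F a c → subE F b c → subE F (U a b) c :=
    fun F a b c ha hb k hk => ((hUr a b k).1 hk).elim (ha k) (hb k)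
  have Uabs : ∀ (F : ℕ → ℕ → Prop) (_ : Equivalence F) c b, subE F b c →
      FSJump F c (U c b) := fun F hF c b hb =>
    (aux_fs_iff hF _ _).2 ⟨Ul F hF c b, Ule F _ _ _ (aux_sub_refl hF c) hb⟩
  have hE1 := aux_fs_equiv E
  have hE2 := aux_fs_equiv (FSJump E)
  have Ssub : ∀ a b, subE (FSJump E) (S a) (S b) ↔ subE E b a := by
    intro a b
    constructor
    · intro hab
      obtain ⟨m, hm, he⟩ := hab (U a a) ((hSr _ _).2 ⟨a, rfl⟩)
      obtain ⟨v, rfl⟩ := (hSr _ _).1 hm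
      exact aux_sub_trans hE (aux_sub_trans hE (Ur E hE v b) ((aux_fs_iff hE _ _).1 he).2)
        (Ule E _ _ _ (aux_sub_refl hE a) (aux_sub_refl hE a))
    · intro hba k hk
      obtain ⟨v, rfl⟩ := (hSr _ _).1 hk
      exact ⟨U (U v a) b, (hSr _ _).2 ⟨U v a, rfl⟩,
        Uabs E hE _ _ (aux_sub_trans hE hba (Ur E hE v a))⟩
  have Jmono : ∀ a b p, subE E a b → subE E (J a p) (J b p) := by
    intro a b p hab k hk
    obtain ⟨x, hx, rfl⟩ := (hJr _ _ _).1 hk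
    obtain ⟨m, hm, he⟩ := hab x hx
    refine ⟨r (Nat.pair m p), (hJr _ _ _).2 ⟨m, hm, rfl⟩, (hrE _ _).1 ?_⟩
    simpa [prodId] using he
  have Jinv : ∀ a b p p' x, x ∈ (phi a).ran → subE E (J a p) (J b p') →
      p = p' ∧ ∃ m ∈ (phi b).ran, E x m := by
    intro a b p p' x hx hab
    obtain ⟨k, hk, he⟩ := hab _ ((hJr _ _ _).2 ⟨x, hx, rfl⟩)
    obtain ⟨m, hm, rfl⟩ := (hJr _ _ _).1 hk
    have := (hrE _ _).2 he
    simp only [prodId, Nat.unpair_pair] at this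
    exact ⟨this.2, m, hm, this.1⟩
  -- the target
  obtain ⟨s0, -, hs0⟩ := aux_total
    (fun _ y => U (Nat.unpair y).1 (S (J e₀ (Nat.unpair y).2)))
    (hU.comp (Computable.fst.comp (Computable.unpair.comp Computable.snd))
      (hS.comp (hJ.comp (Computable.const e₀)
        (Computable.snd.comp (Computable.unpair.comp Computable.snd)))))
  have cy : Computable (fun z : ℕ × ℕ => Nat.unpair z.2) :=
    Computable.unpair.comp Computable.snd
  have cpq : Computable (fun z : ℕ × ℕ => Nat.unpair (Nat.unpair z.2).2) :=
    Computable.unpair.comp (Computable.snd.comp cy)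
  have ct : Computable (fun z : ℕ × ℕ => tripleCode (Nat.unpair (Nat.unpair z.2).2).1
      (Nat.unpair (Nat.unpair z.2).2).2 z.1) :=
    Primrec₂.natPair.to_comp.comp (Computable.fst.comp cpq)
      (Primrec₂.natPair.to_comp.comp (Computable.snd.comp cpq) Computable.fst)
  obtain ⟨g, hg, hgr⟩ := aux_total
    (fun n y => U (Nat.unpair y).1 (S (J (h (tripleCode (Nat.unpair (Nat.unpair y).2).1
      (Nat.unpair (Nat.unpair y).2).2 n)) (Nat.unpair (Nat.unpair y).2).1)))
    (hU.comp (Computable.fst.comp cy)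
      (hS.comp (hJ.comp (hh.comp ct) (Computable.fst.comp cpq))))
  have f0mem : ∀ w p, U w (S (J e₀ p)) ∈ (phi (s0 0)).ran := fun w p =>
    (hs0 _ _).2 ⟨Nat.pair w p, by simp⟩
  have gmem : ∀ n w p q, U w (S (J (h (tripleCode p q n)) p)) ∈ (phi (g n)).ran :=
    fun n w p q => (hgr _ _).2 ⟨Nat.pair w (Nat.pair p q), by simp⟩
  have hsubg : ∀ n, subE (FSJump (FSJump E)) (g n) (s0 0) := by
    intro n k hk
    obtain ⟨y, rfl⟩ := (hgr _ _).1 hk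
    refine ⟨_, f0mem _ (Nat.unpair (Nat.unpair y).2).1, Uabs _ hE1 _ _ ?_⟩
    exact aux_sub_trans hE1 ((Ssub _ _).2 (Jmono _ _ _ (hsub _))) (Ur _ hE1 _ _)
  refine ⟨s0 0, g, hg, fun n => ?_, hsubg⟩
  rw [aux_fs_iff hE2, hP]
  constructor
  · intro hn
    refine ⟨hsubg n, fun k hk => ?_⟩
    obtain ⟨y, rfl⟩ := (hs0 _ _).1 hk
    obtain ⟨q, hq⟩ := hn (Nat.unpair y).2
    have hq' := ((aux_fs_iff hE _ _).1 ((hQ _).1 hq)).2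
    refine ⟨_, gmem n _ (Nat.unpair y).2 q, Uabs _ hE1 _ _ ?_⟩
    exact aux_sub_trans hE1 ((Ssub _ _).2 (Jmono _ _ _ hq')) (Ur _ hE1 _ _)
  · rintro ⟨-, hn⟩ p
    by_cases hA : ∃ x, x ∈ (phi e₀).ran
    · obtain ⟨x₀, hx₀⟩ := hA
      obtain ⟨k, hk, he⟩ := hn _ (f0mem (S (J e₀ p)) p)
      obtain ⟨y, rfl⟩ := (hgr _ _).1 hk
      have h1 := aux_sub_trans hE1 (aux_sub_trans hE1 (Ur _ hE1 _ _)
        ((aux_fs_iff hE1 _ _).1 he).2)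
        (Ule _ _ _ _ (aux_sub_refl hE1 (S (J e₀ p))) (aux_sub_refl hE1 _))
      rw [Ssub] at h1
      have h2 := (Jinv _ _ _ _ x₀ hx₀ h1).1
      refine ⟨(Nat.unpair (Nat.unpair y).2).2, (hQ _).2 ((aux_fs_iff hE _ _).2 ⟨hsub _, ?_⟩)⟩
      intro x hx
      have h3 := (Jinv _ _ _ _ x hx h1).2
      rw [← h2] at h3
      exact h3
    · exact ⟨0, (hQ _).2 ((aux_fs_iff hE _ _).2 ⟨hsub _, fun x hx => (hA ⟨x, hx⟩).elim⟩)⟩
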